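/- arXiv:1305.1503 — 4 statements merged into one kernel-verified Lean document; each statement's English description precedes it below -/
import Mathlib

section
/- Let R be a commutative ring, let J ⊆ R be an arbitrary subset, and let √J denote the radical of the ideal generated by J. Then Loc({R_f : f ∈ J}) = Loc({R_f : f ∈ √J}) in D(R). -/
open CategoryTheory CategoryTheory.Limits CategoryTheory.Pretriangulated ZeroObject

universe w w' v u

section TriangulatedDefs

variable {T : Type u} [Category.{v} T] [Preadditive T] [HasZeroObject T]
  [HasShift T ℤ] [∀ n : ℤ, (shiftFunctor T n).Additive] [Pretriangulated T]

/-- A localizing subcategory of a (pre)triangulated category, encoded as a set of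
objects: it is closed under isomorphisms, contains the zero object, is stable
under shifts, closed under cones of distinguished triangles (hence a full
triangulated subcategory), and closed under arbitrary small coproducts
(phrased via colimit cofans, so that no global existence of coproducts
is needed). -/
structure IsLocalizingSub (S : Set T) : Prop where
  zero_mem : (0 : T) ∈ S
  mem_of_iso : ∀ {x y : T}, (x ≅ y) → x ∈ S → y ∈ S
  shift_mem : ∀ (n : ℤ) {x : T}, x ∈ S → x⟦n⟧ ∈ S
  cone_mem : ∀ (Tr : Triangle T), Tr ∈ distinguishedTriangles →
    Tr.obj₁ ∈ S → Tr.obj₂ ∈ S → Tr.obj₃ ∈ S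
  coprod_mem : ∀ {ι : Type w} (f : ι → T) (c : Cofan f), IsColimit c →
    (∀ i, f i ∈ S) → c.pt ∈ S

/-- A colocalizing subcategory: as `IsLocalizingSub` but with products instead
of coproducts. -/
structure IsColocalizingSub (S : Set T) : Prop where
  zero_mem : (0 : T) ∈ S
  mem_of_iso : ∀ {x y : T}, (x ≅ y) → x ∈ S → y ∈ S
  shift_mem : ∀ (n : ℤ) {x : T}, x ∈ S → x⟦n⟧ ∈ S
  cone_mem : ∀ (Tr : Triangle T), Tr ∈ distinguishedTriangles →
    Tr.obj₁ ∈ S → Tr.obj₂ ∈ S → Tr.obj₃ ∈ S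
  prod_mem : ∀ {ι : Type w} (f : ι → T) (c : Fan f), IsLimit c →
    (∀ i, f i ∈ S) → c.pt ∈ S

/-- `Loc S`: the smallest localizing subcategory containing the set of
objects `S` (the intersection of all localizing subcategories containing it). -/
def Loc (S : Set T) : Set T :=
  ⋂₀ {L : Set T | IsLocalizingSub.{w} L ∧ S ⊆ L}

/-- The right orthogonal of a set of objects. -/
def rightOrth (C : Set T) : Set T :=
  {x : T | ∀ ⦃c : T⦄, c ∈ C → ∀ (g : c ⟶ x), g = 0}

end TriangulatedDefs

section CompactDefs

variable {T : Type u} [Category.{v} T] [Preadditive T]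

/-- The canonical comparison map `⨁ᵢ Hom(x, fᵢ) →+ Hom(x, ∐ f)` associated to a
cofan `c` on a family `f`. -/
noncomputable def cofanHomComparison {ι : Type w} (x : T) (f : ι → T) (c : Cofan f) :
    (Π₀ i, (x ⟶ f i)) →+ (x ⟶ c.pt) :=
  letI := Classical.decEq ι
  DFinsupp.sumAddHom (fun i => AddMonoidHom.mk' (fun φ => φ ≫ c.inj i)
    (fun φ ψ => Preadditive.add_comp _ _ _ φ ψ (c.inj i)))

/-- An object `x` is compact if `Hom(x, -)` commutes with arbitrary small
coproducts, i.e. for every colimit cofan on a family `f`, the canonical map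
`⨁ᵢ Hom(x, fᵢ) → Hom(x, ∐ f)` is bijective. -/
def IsCompactObj (x : T) : Prop :=
  ∀ ⦃ι : Type w⦄ (f : ι → T) (c : Cofan f), IsColimit c →
    Function.Bijective (cofanHomComparison x f c)

end CompactDefs

section DR

variable (R : Type u) [CommRing R] [HasDerivedCategory.{w'} (ModuleCat.{u} R)]

/-- The `R`-module `M`, regarded as an object of the derived category `D(R)`,
as a complex concentrated in degree `0`. -/
noncomputable def smod (M : ModuleCat.{u} R) : DerivedCategory (ModuleCat.{u} R) :=
  (DerivedCategory.singleFunctor (ModuleCat.{u} R) 0).obj M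

end DR

/-!
Everything happens for modules placed in degree zero. There short exact sequences become triangles
and coproducts stay coproducts: the derived category is obtained from complexes by a quotient and
then a localization admitting a right calculus of fractions, at a class of morphisms stable under
coproducts, and both steps preserve coproducts.

Let `L` be a localizing subcategory and `S` an `R`-algebra. Since `S_a` is the cokernel of the
injective multiplication by `a X - 1` on `S[X]`, and `S[X]` is a coproduct of copies of `S`, if `S`
lies in `L` then so does `S_a`. Conversely, if `a` and `b` generate the unit ideal of `S`, the
Mayer-Vietoris sequence `0 → S → S_a × S_b → S_ab → 0` puts `S` in `L` as soon as `S_a` and `S_b`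
are in `L`. Taking `S = R_{f + g}`, the set of `f` with `R_f ∈ L` is closed under addition; it is
closed under multiplication by `R` because `R_{fg}` is a localization of `R_f`, and under
extraction of roots because `R_f` is a localization of `R_{f ^ n}`.
-/

section Fractions

variable {C D : Type*} [Category* C] [Category* D] {ι : Type*}

theorem preservesCoproductsOfShape_of_essSurj (L : C ⥤ D) [L.EssSurj]
    (exists_desc : ∀ {X : ι → C} {s : Cofan X}, IsColimit s → ∀ {Y : C}
      (φ : ∀ i, L.obj (X i) ⟶ L.obj Y), ∃ g, ∀ i, L.map (s.inj i) ≫ g = φ i)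
    (hom_ext : ∀ {X : ι → C} {s : Cofan X}, IsColimit s → ∀ {Y : C} (g₁ g₂ : L.obj s.pt ⟶ L.obj Y),
      (∀ i, L.map (s.inj i) ≫ g₁ = L.map (s.inj i) ≫ g₂) → g₁ = g₂) :
    PreservesColimitsOfShape (Discrete ι) L := by
  have (X : ι → C) : PreservesColimit (Discrete.functor X) L := ⟨fun {s} hs ↦ ⟨by
    refine (Cofan.isColimitMapCoconeEquiv (c := s) L).symm <| .ofExistsUnique fun t ↦ ?_
    let e := L.objObjPreimageIso t.pt
    obtain ⟨g, hg⟩ := exists_desc hs fun i ↦ Cofan.inj t i ≫ e.inv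
    refine ⟨g ≫ e.hom, fun ⟨i⟩ ↦ ?_, fun g' hg' ↦ (Iso.comp_inv_eq e).1 (hom_ext hs _ _ fun i ↦ ?_)⟩
    · exact (Category.assoc _ _ _).symm.trans ((Iso.eq_comp_inv e).1 (hg i))
    · rw [hg, ← Category.assoc]
      exact hg' ⟨i⟩ =≫ e.inv⟩⟩
  exact preservesColimitsOfShape_of_discrete L

theorem sigmaDesc_comp_inj_mem (W : MorphismProperty C) [W.IsStableUnderCoproductsOfShape ι]
    [HasCoproductsOfShape ι C] {X X' : ι → C} {s : Cofan X} (hs : IsColimit s)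
    (t : ∀ i, X' i ⟶ X i) (ht : ∀ i, W (t i)) : W (Sigma.desc fun i ↦ t i ≫ s.inj i) :=
  MorphismProperty.IsStableUnderColimitsOfShape.condition (W := W) (J := Discrete ι) _ _ _ _
    (coproductIsCoproduct X') hs (Discrete.natTrans fun i ↦ t i.as) (fun i ↦ ht i.as) _
    fun i ↦ Sigma.ι_desc _ i.as

section

variable (L : C ⥤ D) (W : MorphismProperty C) [L.IsLocalization W] [W.HasRightCalculusOfFractions]

theorem exists_common_denominator {X Y : C} (g₁ g₂ : L.obj X ⟶ L.obj Y) :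
    ∃ (K : C) (σ : K ⟶ X) (f₁ f₂ : K ⟶ Y), W σ ∧
      L.map σ ≫ g₁ = L.map f₁ ∧ L.map σ ≫ g₂ = L.map f₂ := by
  obtain ⟨z₁, rfl⟩ := Localization.exists_rightFraction L W g₁
  obtain ⟨z₂, hz₂⟩ := Localization.exists_rightFraction L W (L.map z₁.s ≫ g₂)
  refine ⟨z₂.X', z₂.s ≫ z₁.s, z₂.s ≫ z₁.f, z₂.f, W.comp_mem _ _ z₂.hs z₁.hs, ?_, ?_⟩
  · simp
  · rw [L.map_comp, Category.assoc, hz₂, MorphismProperty.RightFraction.map_s_comp_map]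

theorem hom_ext_of_isColimit_cofan [W.IsStableUnderCoproductsOfShape ι] [HasCoproductsOfShape ι C]
    {X : ι → C} {s : Cofan X} (hs : IsColimit s) {Y : C} {g₁ g₂ : L.obj s.pt ⟶ L.obj Y}
    (h : ∀ i, L.map (s.inj i) ≫ g₁ = L.map (s.inj i) ≫ g₂) : g₁ = g₂ := by
  obtain ⟨K, σ, f₁, f₂, hσ, h₁, h₂⟩ := exists_common_denominator L W g₁ g₂
  have exists_lift (i : ι) : ∃ (X' : C) (t : X' ⟶ X i) (q : X' ⟶ K),
      W t ∧ t ≫ s.inj i = q ≫ σ ∧ q ≫ f₁ = q ≫ f₂ := by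
    obtain ⟨z, hz⟩ := (MorphismProperty.LeftFraction.mk (s.inj i) σ hσ).exists_rightFraction
    have hL : L.map (z.f ≫ f₁) = L.map (z.f ≫ f₂) := by
      simp only [L.map_comp, ← h₁, ← h₂, ← Category.assoc]
      simp only [← L.map_comp, ← hz]
      simp only [L.map_comp, Category.assoc, h i]
    obtain ⟨X', r, hr, hrf⟩ := (MorphismProperty.map_eq_iff_precomp L W _ _).1 hL
    exact ⟨X', r ≫ z.s, r ≫ z.f, W.comp_mem _ _ hr z.hs, by simpa using r ≫= hz, by simpa using hrf⟩
  choose X' t q ht hq hqf using exists_lift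
  have hτ : Sigma.desc q ≫ σ = Sigma.desc fun i ↦ t i ≫ s.inj i :=
    Sigma.hom_ext _ _ fun i ↦ by simp [hq]
  have : IsIso (L.map (Sigma.desc q ≫ σ)) :=
    Localization.inverts L W _ (hτ ▸ sigmaDesc_comp_inj_mem W hs t ht)
  have hqf' : Sigma.desc q ≫ f₁ = Sigma.desc q ≫ f₂ := Sigma.hom_ext _ _ fun i ↦ by simp [hqf]
  rw [← cancel_epi (L.map (Sigma.desc q ≫ σ))]
  simp only [L.map_comp, Category.assoc, h₁, h₂]
  simp only [← L.map_comp, hqf']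

theorem preservesCoproductsOfShape_of_hasRightCalculusOfFractions
    [W.IsStableUnderCoproductsOfShape ι] [HasCoproductsOfShape ι C] :
    PreservesColimitsOfShape (Discrete ι) L := by
  have := Localization.essSurj L W
  refine preservesCoproductsOfShape_of_essSurj L (fun {X s} hs Y φ ↦ ?_)
    fun hs _ _ _ ↦ hom_ext_of_isColimit_cofan L W hs
  choose z hz using fun i ↦ Localization.exists_rightFraction L W (φ i)
  let τ := Sigma.desc fun i ↦ (z i).s ≫ s.inj i
  have : IsIso (L.map τ) :=
    Localization.inverts L W _ (sigmaDesc_comp_inj_mem W hs _ fun i ↦ (z i).hs)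
  refine ⟨inv (L.map τ) ≫ L.map (Sigma.desc fun i ↦ (z i).f), fun i ↦ ?_⟩
  have := Localization.inverts L W _ (z i).hs
  have hι : L.map (z i).s ≫ L.map (s.inj i) = L.map (Sigma.ι _ i) ≫ L.map τ := by
    rw [← L.map_comp, ← L.map_comp, Sigma.ι_desc]
  rw [← cancel_epi (L.map (z i).s), ← Category.assoc, hι, hz, Category.assoc,
    IsIso.hom_inv_id_assoc, ← L.map_comp, Sigma.ι_desc,
    MorphismProperty.RightFraction.map_s_comp_map]

end

end Fractions

section ShortComplexHomology

variable {J C : Type*} [Category* J] [Category* C]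

section

variable [HasColimitsOfShape J C]

variable (J C) in
/-- The coprojections of the colimits of shape `J`, as natural transformations in the diagram. -/
noncomputable def evaluationToColim (j : J) : (evaluation J C).obj j ⟶ colim where
  app F := colimit.ι F j

variable [HasZeroMorphisms C]

/-- The cocone over a diagram of short complexes whose point consists of the colimits of the three
terms. The diagram is encoded as a short complex of functors. -/
noncomputable def shortComplexColimitCocone (S : ShortComplex (J ⥤ C)) :
    Cocone ((ShortComplex.functorEquivalence J C).functor.obj S) where
  pt := S.map colim
  ι :=
    { app j := S.mapNatTrans (evaluationToColim J C j)
      naturality i j f := by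
        ext <;> exact (colimit.w _ f).trans (Category.comp_id _).symm }

/-- The termwise colimit of a diagram of short complexes is its colimit. -/
noncomputable def isColimitShortComplexColimitCocone (S : ShortComplex (J ⥤ C)) :
    IsColimit (shortComplexColimitCocone S) :=
  ShortComplex.isColimitOfIsColimitπ _
    (colimit.isColimit S.X₁) (colimit.isColimit S.X₂) (colimit.isColimit S.X₃)

end

variable [Abelian C]

/-- The homology of a short complex of functors is computed objectwise. -/
noncomputable def homologyIsoCompHomologyFunctor (S : ShortComplex (J ⥤ C)) :
    S.homology ≅
      (ShortComplex.functorEquivalence J C).functor.obj S ⋙ ShortComplex.homologyFunctor C :=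
  NatIso.ofComponents
    (fun j ↦ (ShortComplex.mapHomologyIso _ ((evaluation J C).obj j)).symm)
    (fun f ↦ (Iso.comp_inv_eq _).2 <|
      (NatTrans.app_homology ((evaluation J C).map f) S).trans (Category.assoc _ _ _).symm)

variable [HasColimitsOfShape J C] [HasExactColimitsOfShape J C]

instance preservesColimit_shortComplexHomologyFunctor (S : ShortComplex (J ⥤ C)) :
    PreservesColimit ((ShortComplex.functorEquivalence J C).functor.obj S)
      (ShortComplex.homologyFunctor C) :=
  preservesColimit_of_preserves_colimit_cocone (isColimitShortComplexColimitCocone S) <|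
    IsColimit.equivOfNatIsoOfIso (homologyIsoCompHomologyFunctor S) (colimit.cocone S.homology)
      ((ShortComplex.homologyFunctor C).mapCocone (shortComplexColimitCocone S))
      (Cocone.ext (S.mapHomologyIso colim).symm fun j ↦ (Category.assoc _ _ _).trans
        (ShortComplex.homologyMap_mapNatTrans S (evaluationToColim J C j)).symm)
      (colimit.isColimit S.homology)

instance preservesColimitsOfShape_shortComplexHomologyFunctor :
    PreservesColimitsOfShape J (ShortComplex.homologyFunctor C) where
  preservesColimit {F} :=
    let E := ShortComplex.functorEquivalence J C
    preservesColimit_of_iso_diagram (K₁ := E.functor.obj (E.inverse.obj F)) _ (E.counitIso.app F)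

end ShortComplexHomology

section EssSurj

variable {C K A : Type*} [Category* C] [Category* K] [Category* A] {ι : Type*} (q : C ⥤ K)
  [q.EssSurj]

/-- A family of objects in the target of an essentially surjective functor lifts to the source, up
to isomorphism. -/
noncomputable def discreteObjPreimageCompIso (F : Discrete ι ⥤ K) :
    Discrete.functor (fun i ↦ q.objPreimage (F.obj ⟨i⟩)) ⋙ q ≅ F :=
  Discrete.natIso fun i ↦ q.objObjPreimageIso (F.obj i)

variable [HasCoproductsOfShape ι C] [PreservesColimitsOfShape (Discrete ι) q]

include q in
theorem hasCoproductsOfShape_of_essSurj : HasCoproductsOfShape ι K where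
  has_colimit F := hasColimit_of_iso (discreteObjPreimageCompIso q F).symm

theorem preservesCoproductsOfShape_of_comp_essSurj (H : K ⥤ A)
    [PreservesColimitsOfShape (Discrete ι) (q ⋙ H)] :
    PreservesColimitsOfShape (Discrete ι) H where
  preservesColimit {F} := by
    let X := Discrete.functor fun i ↦ q.objPreimage (F.obj ⟨i⟩)
    have : PreservesColimit (X ⋙ q) H :=
      preservesColimit_of_preserves_colimit_cocone (isColimitOfPreserves q (colimit.isColimit X))
        (isColimitOfPreserves (q ⋙ H) (colimit.isColimit X))
    exact preservesColimit_of_iso_diagram H (discreteObjPreimageCompIso q F)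

end EssSurj

section DerivedCategory

open HomologicalComplex DerivedCategory

variable {C : Type*} [Category* C] {ι κ : Type*} {c : ComplexShape κ}

section

variable [Preadditive C] [HasBinaryBiproducts C]

-- The path object of `L` turns the family of homotopies into a family of morphisms to one complex.
theorem homotopic_of_isColimit_cofan (hc : ∀ i, ∃ j, c.Rel i j) {K : ι → HomologicalComplex C c}
    {s : Cofan K} (hs : IsColimit s) {L : HomologicalComplex C c} (f g : s.pt ⟶ L)
    (h : ∀ i, Nonempty (Homotopy (s.inj i ≫ f) (s.inj i ≫ g))) :
    Nonempty (Homotopy f g) := by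
  classical
  let H := Cofan.IsColimit.desc hs (fun i ↦ pathObject.lift _ _ (h i).some)
  have h₀ : H ≫ pathObject.π₀ L = f := Cofan.IsColimit.hom_ext hs _ _ fun i ↦ by simp [H]
  have h₁ : H ≫ pathObject.π₁ L = g := Cofan.IsColimit.hom_ext hs _ _ fun i ↦ by simp [H]
  rw [← h₀, ← h₁]
  exact ⟨(pathObject.homotopy₀₁ L hc).compLeft H⟩

theorem preservesCoproductsOfShape_homotopyQuotient (hc : ∀ i, ∃ j, c.Rel i j) :
    PreservesColimitsOfShape (Discrete ι) (HomotopyCategory.quotient C c) := by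
  refine preservesCoproductsOfShape_of_essSurj _ (fun hs Y φ ↦ ?_) fun hs Y g₁ g₂ h ↦ ?_
  · choose f hf using fun i ↦ (HomotopyCategory.quotient C c).map_surjective (φ i)
    exact ⟨(HomotopyCategory.quotient C c).map (Cofan.IsColimit.desc hs f), fun i ↦ by
      rw [← Functor.map_comp, Cofan.IsColimit.fac, hf]⟩
  · obtain ⟨f₁, rfl⟩ := (HomotopyCategory.quotient C c).map_surjective g₁
    obtain ⟨f₂, rfl⟩ := (HomotopyCategory.quotient C c).map_surjective g₂
    simp only [← Functor.map_comp] at h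
    obtain ⟨H⟩ := homotopic_of_isColimit_cofan hc hs f₁ f₂ fun i ↦
      ⟨HomotopyCategory.homotopyOfEq _ _ (h i)⟩
    exact HomotopyCategory.eq_of_homotopy _ _ H

end

variable [Abelian C]

theorem preservesColimitsOfShape_homologyFunctor {J : Type*} [Category* J]
    [HasColimitsOfShape J C] [HasExactColimitsOfShape J C] (n : κ) :
    PreservesColimitsOfShape J (homologyFunctor C c n) := by
  have : PreservesColimitsOfShape J (shortComplexFunctor C c n) :=
    { preservesColimit :=
        { preserves hs := ⟨ShortComplex.isColimitOfIsColimitπ _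
            (isColimitOfPreserves (eval C c (c.prev n)) hs)
            (isColimitOfPreserves (eval C c n) hs)
            (isColimitOfPreserves (eval C c (c.next n)) hs)⟩ } }
  exact preservesColimitsOfShape_of_natIso (homologyFunctorIso C c n).symm

variable [HasCoproductsOfShape ι C] [HasExactColimitsOfShape (Discrete ι) C]

theorem isStableUnderCoproductsOfShape_quasiIso (hc : ∀ i, ∃ j, c.Rel i j) :
    (HomotopyCategory.quasiIso C c).IsStableUnderCoproductsOfShape ι where
  condition X₁ X₂ c₁ c₂ hc₁ hc₂ f hf φ hφ n := by
    have := preservesCoproductsOfShape_homotopyQuotient (C := C) (ι := ι) hc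
    have := preservesColimitsOfShape_homologyFunctor (C := C) (c := c) (J := Discrete ι) n
    have := preservesColimitsOfShape_of_natIso (J := Discrete ι)
      (HomotopyCategory.homologyFunctorFactors C c n).symm
    have := preservesCoproductsOfShape_of_comp_essSurj (ι := ι) (HomotopyCategory.quotient C c)
      (HomotopyCategory.homologyFunctor C c n)
    let H := HomotopyCategory.homologyFunctor C c n
    exact MorphismProperty.IsStableUnderColimitsOfShape.condition
      (W := MorphismProperty.isomorphisms _) _ _ _ _
      (isColimitOfPreserves H hc₁) (isColimitOfPreserves H hc₂) (Functor.whiskerRight f H)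
      (fun j ↦ hf j n) _
      fun j ↦ (H.map_comp _ _).symm.trans ((congrArg H.map (hφ j)).trans (H.map_comp _ _))

variable [HasDerivedCategory C]

theorem preservesCoproductsOfShape_Q :
    PreservesColimitsOfShape (Discrete ι) (Q (C := C)) := by
  have hc : ∀ i, ∃ j, (ComplexShape.up ℤ).Rel i j := fun i ↦ ⟨i + 1, rfl⟩
  have := preservesCoproductsOfShape_homotopyQuotient (C := C) (ι := ι) hc
  have := hasCoproductsOfShape_of_essSurj (ι := ι) (HomotopyCategory.quotient C (ComplexShape.up ℤ))
  have := isStableUnderCoproductsOfShape_quasiIso (C := C) (ι := ι) hc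
  have := preservesCoproductsOfShape_of_hasRightCalculusOfFractions (ι := ι) (Qh (C := C))
    (HomotopyCategory.quasiIso C (ComplexShape.up ℤ))
  exact preservesColimitsOfShape_of_natIso (quotientCompQhIso C)

theorem preservesCoproductsOfShape_singleFunctor (n : ℤ) :
    PreservesColimitsOfShape (Discrete ι) (singleFunctor C n) := by
  have := preservesCoproductsOfShape_Q (C := C) (ι := ι)
  have : PreservesColimitsOfShape (Discrete ι) (CochainComplex.singleFunctor C n) :=
    inferInstanceAs (PreservesColimitsOfShape _ (HomologicalComplex.single C (ComplexShape.up ℤ) n))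
  exact preservesColimitsOfShape_of_natIso (singleFunctorIsoCompQ C n).symm

end DerivedCategory

section Localizing

variable {T : Type u} [Category.{v} T] [Preadditive T] [HasZeroObject T]
  [HasShift T ℤ] [∀ n : ℤ, (shiftFunctor T n).Additive] [Pretriangulated T]

theorem subset_loc (S : Set T) : S ⊆ Loc.{w} S :=
  Set.subset_sInter fun _ hL ↦ hL.2

theorem isLocalizingSub_loc (S : Set T) : IsLocalizingSub.{w} (Loc.{w} S) where
  zero_mem _ hL := hL.1.zero_mem
  mem_of_iso e hx L hL := hL.1.mem_of_iso e (hx L hL)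
  shift_mem n _ hx L hL := hL.1.shift_mem n (hx L hL)
  cone_mem Tr hTr h₁ h₂ L hL := hL.1.cone_mem Tr hTr (h₁ L hL) (h₂ L hL)
  coprod_mem f c hc hf L hL := hL.1.coprod_mem f c hc fun i ↦ hf i L hL

namespace IsLocalizingSub

variable {L : Set T} (hL : IsLocalizingSub.{w} L)
include hL

theorem loc_subset {S : Set T} (h : S ⊆ L) : Loc.{w} S ⊆ L :=
  Set.sInter_subset_of_mem ⟨hL, h⟩

theorem mem_of_isZero {x : T} (hx : IsZero x) : x ∈ L :=
  hL.mem_of_iso hx.isoZero.symm hL.zero_mem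

theorem obj₁_mem {Tr : Triangle T} (hTr : Tr ∈ distinguishedTriangles) (h₂ : Tr.obj₂ ∈ L)
    (h₃ : Tr.obj₃ ∈ L) : Tr.obj₁ ∈ L :=
  hL.mem_of_iso (shiftShiftNeg Tr.obj₁ (1 : ℤ)) <|
    hL.shift_mem (-1) <| hL.cone_mem _ (rot_of_distTriang _ hTr) h₂ h₃

theorem obj₂_mem {Tr : Triangle T} (hTr : Tr ∈ distinguishedTriangles) (h₁ : Tr.obj₁ ∈ L)
    (h₃ : Tr.obj₃ ∈ L) : Tr.obj₂ ∈ L :=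
  hL.cone_mem _ (inv_rot_of_distTriang _ hTr) (hL.shift_mem (-1) h₃) h₁

end IsLocalizingSub

end Localizing

section MayerVietoris

open IsLocalization

section

variable {S A B C : Type*} [CommRing S] [CommRing A] [CommRing B] [CommRing C]
  [Algebra S A] [Algebra S B] [Algebra S C] [Algebra A C] [Algebra B C]
  [IsScalarTower S A C] [IsScalarTower S B C] {a b : S}

theorem eq_zero_of_algebraMap_eq_zero_of_isCoprime [Away a A] [Away b B] (hab : IsCoprime a b)
    {s : S} (hA : algebraMap S A s = 0) (hB : algebraMap S B s = 0) : s = 0 := by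
  obtain ⟨m, hm⟩ := Away.exists_of_eq a (hA.trans (map_zero _).symm)
  obtain ⟨n, hn⟩ := Away.exists_of_eq b (hB.trans (map_zero _).symm)
  obtain ⟨u, v, huv⟩ := hab.pow (m := m) (n := n)
  linear_combination (-s) * huv + u * hm + v * hn

theorem exists_algebraMap_eq_pow_mul [Away a A] [Away (algebraMap S B a) C] {x : A} {y : B}
    (h : algebraMap A C x = algebraMap B C y) :
    ∃ (n : ℕ) (s : S), algebraMap S A s = algebraMap S A a ^ n * x ∧
      algebraMap S B s = algebraMap S B a ^ n * y := by
  obtain ⟨m, s, hs⟩ := Away.surj a x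
  have hC : algebraMap B C (algebraMap S B a ^ m * y) = algebraMap B C (algebraMap S B s) := by
    rw [← IsScalarTower.algebraMap_apply, IsScalarTower.algebraMap_apply S A C, ← hs]
    simp only [map_mul, map_pow, ← h, ← IsScalarTower.algebraMap_apply]
    ring
  obtain ⟨k, hk⟩ := Away.exists_of_eq (algebraMap S B a) hC
  refine ⟨k + m, a ^ k * s, ?_, ?_⟩
  · rw [map_mul, map_pow, ← hs]
    ring
  · rw [map_mul, map_pow, ← hk]
    ring

theorem exists_algebraMap_eq_of_isCoprime [Away a A] [Away b B] [Away (algebraMap S A b) C]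
    [Away (algebraMap S B a) C] (hab : IsCoprime a b) {x : A} {y : B}
    (h : algebraMap A C x = algebraMap B C y) :
    ∃ s : S, algebraMap S A s = x ∧ algebraMap S B s = y := by
  obtain ⟨m, s, hsx, hsy⟩ := exists_algebraMap_eq_pow_mul (a := a) h
  obtain ⟨n, t, hty, htx⟩ := exists_algebraMap_eq_pow_mul (a := b) h.symm
  obtain ⟨u, v, huv⟩ := hab.pow (m := m) (n := n)
  refine ⟨u * s + v * t, ?_, ?_⟩
  · have hA := congr_arg (algebraMap S A) huv
    simp only [map_add, map_mul, map_pow, map_one, hsx, htx] at hA ⊢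
    linear_combination x * hA
  · have hB := congr_arg (algebraMap S B) huv
    simp only [map_add, map_mul, map_pow, map_one, hsy, hty] at hB ⊢
    linear_combination y * hB

theorem exists_algebraMap_sub_algebraMap_eq [Away (algebraMap S A b) C]
    [Away (algebraMap S B a) C] (hab : IsCoprime a b) (z : C) :
    ∃ (x : A) (y : B), algebraMap A C x - algebraMap B C y = z := by
  obtain ⟨n, x, hx⟩ := Away.surj (algebraMap S A b) z
  obtain ⟨m, y, hy⟩ := Away.surj (algebraMap S B a) z
  obtain ⟨u, v, huv⟩ := hab.pow (m := m) (n := n)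
  refine ⟨algebraMap S A v * x, -(algebraMap S B u * y), ?_⟩
  have hC := congr_arg (algebraMap S C) huv
  simp only [map_add, map_mul, map_pow, map_one, map_neg, ← hx, ← hy,
    ← IsScalarTower.algebraMap_apply] at hC ⊢
  linear_combination z * hC

end

section

variable (R S A B C : Type*) [CommRing R] [CommRing S] [CommRing A] [CommRing B] [CommRing C]
  [Algebra R A] [Algebra R B] [Algebra R C] [Algebra S A] [Algebra S B]
  [Algebra A C] [Algebra B C] [IsScalarTower R A C] [IsScalarTower R B C]

/-- The difference map `(x, y) ↦ x - y` of the Mayer-Vietoris sequence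
`0 → S → S_a × S_b → S_ab → 0`, where `A = S_a`, `B = S_b` and `C = S_ab`. -/
def mayerVietorisDifference : A × B →ₗ[R] C :=
  (IsScalarTower.toAlgHom R A C).toLinearMap.coprod (-(IsScalarTower.toAlgHom R B C).toLinearMap)

variable {S} in
theorem mayerVietorisDifference_surjective [Algebra S C] [IsScalarTower S A C]
    [IsScalarTower S B C] {a b : S} [Away (algebraMap S A b) C] [Away (algebraMap S B a) C]
    (hab : IsCoprime a b) : Function.Surjective (mayerVietorisDifference R A B C) := fun z ↦
  have ⟨x, y, h⟩ := exists_algebraMap_sub_algebraMap_eq (A := A) (B := B) hab z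
  ⟨(x, y), (sub_eq_add_neg _ _).symm.trans h⟩

variable [Algebra R S] [IsScalarTower R S A] [IsScalarTower R S B]

/-- The restriction map `s ↦ (s, s)` of the Mayer-Vietoris sequence
`0 → S → S_a × S_b → S_ab → 0`, where `A = S_a` and `B = S_b`. -/
def mayerVietorisRestriction : S →ₗ[R] A × B :=
  (IsScalarTower.toAlgHom R S A).toLinearMap.prod (IsScalarTower.toAlgHom R S B).toLinearMap

variable {S} {a b : S} [Away a A] [Away b B]

theorem mayerVietorisRestriction_injective (hab : IsCoprime a b) :
    Function.Injective (mayerVietorisRestriction R S A B) :=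
  (injective_iff_map_eq_zero _).2 fun _ hs ↦ eq_zero_of_algebraMap_eq_zero_of_isCoprime
    (A := A) (B := B) hab (congr_arg Prod.fst hs) (congr_arg Prod.snd hs)

theorem exact_mayerVietoris [Algebra S C] [IsScalarTower S A C] [IsScalarTower S B C]
    [Away (algebraMap S A b) C] [Away (algebraMap S B a) C] (hab : IsCoprime a b) :
    Function.Exact (mayerVietorisRestriction R S A B) (mayerVietorisDifference R A B C) := by
  rintro ⟨x, y⟩
  have h_iff : mayerVietorisDifference R A B C (x, y) = 0 ↔ algebraMap A C x = algebraMap B C y :=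
    add_neg_eq_zero
  rw [h_iff]
  constructor
  · intro h
    obtain ⟨s, hx, hy⟩ := exists_algebraMap_eq_of_isCoprime hab h
    exact ⟨s, Prod.ext hx hy⟩
  · rintro ⟨s, hs⟩
    obtain ⟨rfl, rfl⟩ := Prod.ext_iff.1 hs
    exact (IsScalarTower.algebraMap_apply S A C s).symm.trans
      (IsScalarTower.algebraMap_apply S B C s)

end

end MayerVietoris

section Modules

theorem moduleCat_shortExact_of_exact {R : Type*} [Ring R] {M N P : Type v}
    [AddCommGroup M] [Module R M] [AddCommGroup N] [Module R N] [AddCommGroup P] [Module R P]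
    {f : M →ₗ[R] N} {g : N →ₗ[R] P} (hf : Function.Injective f) (h : Function.Exact f g)
    (hg : Function.Surjective g) :
    (ModuleCat.shortComplexOfCompEqZero f g h.linearMap_comp_eq_zero).ShortExact :=
  ModuleCat.shortComplex_shortExact _ h hf hg

variable {R : Type u} [CommRing R] [HasDerivedCategory.{w'} (ModuleCat.{u} R)]
  {L : Set (DerivedCategory (ModuleCat.{u} R))}

namespace IsLocalizingSub

section

variable {M N P : Type u} [AddCommGroup M] [Module R M] [AddCommGroup N] [Module R N]
  [AddCommGroup P] [Module R P]

theorem smod_mem_of_linearEquiv (hL : IsLocalizingSub.{w} L) (e : M ≃ₗ[R] N)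
    (hM : smod R (.of R M) ∈ L) : smod R (.of R N) ∈ L :=
  hL.mem_of_iso ((DerivedCategory.singleFunctor _ 0).mapIso e.toModuleIso) hM

theorem smod_mem_of_subsingleton (hL : IsLocalizingSub.{w} L) [Subsingleton M] :
    smod R (.of R M) ∈ L :=
  hL.mem_of_isZero <|
    (DerivedCategory.singleFunctor _ 0).map_isZero (ModuleCat.isZero_of_subsingleton _)

theorem smod_mem_of_exact₁ (hL : IsLocalizingSub.{w} L) {f : M →ₗ[R] N} {g : N →ₗ[R] P}
    (hf : Function.Injective f) (h : Function.Exact f g) (hg : Function.Surjective g)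
    (hN : smod R (.of R N) ∈ L) (hP : smod R (.of R P) ∈ L) : smod R (.of R M) ∈ L :=
  hL.obj₁_mem (moduleCat_shortExact_of_exact hf h hg).singleTriangle_distinguished hN hP

theorem smod_mem_of_exact₂ (hL : IsLocalizingSub.{w} L) {f : M →ₗ[R] N} {g : N →ₗ[R] P}
    (hf : Function.Injective f) (h : Function.Exact f g) (hg : Function.Surjective g)
    (hM : smod R (.of R M) ∈ L) (hP : smod R (.of R P) ∈ L) : smod R (.of R N) ∈ L :=
  hL.obj₂_mem (moduleCat_shortExact_of_exact hf h hg).singleTriangle_distinguished hM hP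

theorem smod_mem_of_exact₃ (hL : IsLocalizingSub.{w} L) {f : M →ₗ[R] N} {g : N →ₗ[R] P}
    (hf : Function.Injective f) (h : Function.Exact f g) (hg : Function.Surjective g)
    (hM : smod R (.of R M) ∈ L) (hN : smod R (.of R N) ∈ L) : smod R (.of R P) ∈ L :=
  hL.cone_mem _ (moduleCat_shortExact_of_exact hf h hg).singleTriangle_distinguished hM hN

theorem smod_prod_mem (hL : IsLocalizingSub.{w} L) (hM : smod R (.of R M) ∈ L)
    (hN : smod R (.of R N) ∈ L) : smod R (.of R (M × N)) ∈ L :=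
  hL.smod_mem_of_exact₂ LinearMap.inl_injective Function.Exact.inl_snd LinearMap.snd_surjective
    hM hN

theorem smod_finsupp_mem (hL : IsLocalizingSub.{u} L) (ι : Type u) (hM : smod R (.of R M) ∈ L) :
    smod R (.of R (ι →₀ M)) ∈ L := by
  classical
  have := preservesCoproductsOfShape_singleFunctor (C := ModuleCat.{u} R) (ι := ι) 0
  refine hL.smod_mem_of_linearEquiv (finsuppLEquivDirectSum R M ι).symm <|
    hL.coprod_mem _ _ (isColimitCofanMkObjOfIsColimit (DerivedCategory.singleFunctor _ 0) _ _
      (ModuleCat.coproductCoconeIsColimit fun _ : ι ↦ ModuleCat.of R M)) fun _ ↦ hM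

end

end IsLocalizingSub

open Polynomial

theorem isRegular_C_mul_X_sub_one {S : Type*} [CommRing S] (a : S) :
    IsRegular (C a * X - 1 : S[X]) :=
  isRegular_iff_mem_nonZeroDivisors.2 <| Polynomial.mem_nonZeroDivisors_iff.2 fun s hs ↦ by
    simpa using congr_arg (coeff · 0) hs

theorem exact_mulLeft_adjoinRootMkₐ (R : Type*) {S : Type*} [CommRing R] [CommRing S]
    [Algebra R S] (p : S[X]) :
    Function.Exact (LinearMap.mulLeft R p)
      ((AdjoinRoot.mkₐ p).restrictScalars R).toLinearMap := fun _ ↦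
  AdjoinRoot.mk_eq_zero.trans ⟨fun ⟨q, hq⟩ ↦ ⟨q, hq.symm⟩, fun ⟨q, hq⟩ ↦ ⟨q, hq.symm⟩⟩

namespace IsLocalizingSub

variable (hL : IsLocalizingSub.{u} L)
include hL

section

variable {S : Type u} [CommRing S] [Algebra R S]

theorem smod_polynomial_mem (hS : smod R (.of R S) ∈ L) : smod R (.of R S[X]) ∈ L :=
  hL.smod_mem_of_linearEquiv
    ((Finsupp.domLCongr Equiv.ulift).trans
      ((basisMonomials S).repr.symm.restrictScalars R))
    (hL.smod_finsupp_mem (ULift.{u} ℕ) hS)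

theorem smod_adjoinRoot_mem {p : S[X]} (hp : IsLeftRegular p)
    (hS : smod R (.of R S) ∈ L) : smod R (.of R (AdjoinRoot p)) ∈ L :=
  hL.smod_mem_of_exact₃ hp (exact_mulLeft_adjoinRootMkₐ R p) AdjoinRoot.mk_surjective
    (hL.smod_polynomial_mem hS) (hL.smod_polynomial_mem hS)

theorem smod_away_mem (a : S) (A : Type u) [CommRing A] [Algebra S A] [Algebra R A]
    [IsScalarTower R S A] [IsLocalization.Away a A]
    (hS : smod R (.of R S) ∈ L) : smod R (.of R A) ∈ L :=
  have := IsLocalization.adjoin_inv a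
  hL.smod_mem_of_linearEquiv
    ((IsLocalization.algEquiv (Submonoid.powers a)
      (AdjoinRoot (C a * X - 1)) A).toLinearEquiv.restrictScalars R)
    (hL.smod_adjoinRoot_mem (isRegular_C_mul_X_sub_one a).left hS)

end

theorem smod_away_mul_mem (A B : Type u) [CommRing A] [Algebra R A] [CommRing B] [Algebra R B]
    (f g : R) [IsLocalization.Away f A] [IsLocalization.Away (f * g) B]
    (hA : smod R (.of R A) ∈ L) : smod R (.of R B) ∈ L :=
  hL.smod_mem_of_linearEquiv
    (IsLocalization.algEquiv (Submonoid.powers (f * g))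
      (Localization.Away (algebraMap R A g)) B).toLinearEquiv
    (hL.smod_away_mem (algebraMap R A g) _ hA)

theorem smod_mem_of_isCoprime {S : Type u} (A B : Type u) [CommRing S] [CommRing A] [CommRing B]
    [Algebra R S] [Algebra R A] [Algebra R B] [Algebra S A] [Algebra S B] [IsScalarTower R S A]
    [IsScalarTower R S B] {a b : S} [IsLocalization.Away a A] [IsLocalization.Away b B]
    (hab : IsCoprime a b) (hA : smod R (.of R A) ∈ L) (hB : smod R (.of R B) ∈ L) :
    smod R (.of R S) ∈ L := by
  let C := Localization.Away (algebraMap S A b)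
  have hb : IsUnit (algebraMap S C b) := IsScalarTower.algebraMap_apply S A C b ▸
    IsLocalization.Away.algebraMap_isUnit (algebraMap S A b)
  let _ : Algebra B C := (IsLocalization.Away.lift b hb).toAlgebra
  have : IsScalarTower S B C := .of_algebraMap_eq fun s ↦ (IsLocalization.Away.lift_eq b hb s).symm
  have : IsScalarTower R B C := .to₁₃₄ R S B C
  have : IsLocalization.Away (algebraMap S B a) C := .commutes B A C b a
  exact hL.smod_mem_of_exact₁ (mayerVietorisRestriction_injective R A B hab)
    (exact_mayerVietoris R A B C hab) (mayerVietorisDifference_surjective R A B C hab)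
    (hL.smod_prod_mem hA hB) (hL.smod_away_mem (algebraMap S A b) C hA)

theorem smod_away_add_mem {f g : R} (hf : smod R (.of R (Localization.Away f)) ∈ L)
    (hg : smod R (.of R (Localization.Away g)) ∈ L) :
    smod R (.of R (Localization.Away (f + g))) ∈ L := by
  let S := Localization.Away (f + g)
  obtain ⟨v, hv⟩ := (IsLocalization.Away.algebraMap_isUnit (S := S) (f + g)).exists_left_inv
  have hfg : IsCoprime (algebraMap R S f) (algebraMap R S g) :=
    ⟨v, v, by rw [← mul_add, ← map_add, hv]⟩
  exact hL.smod_mem_of_isCoprime (Localization.Away (algebraMap R S f))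
    (Localization.Away (algebraMap R S g)) hfg
    (hL.smod_away_mul_mem (Localization.Away f) _ f (f + g) hf)
    (hL.smod_away_mul_mem (Localization.Away g) _ g (f + g) hg)

theorem smod_away_mem_of_mem_span {J : Set R}
    (hJ : ∀ f ∈ J, smod R (.of R (Localization.Away f)) ∈ L) {f : R} (hf : f ∈ Ideal.span J) :
    smod R (.of R (Localization.Away f)) ∈ L := by
  induction hf using Submodule.span_induction with
  | mem f hf => exact hJ f hf
  | zero =>
    have : Subsingleton (Localization.Away (0 : R)) :=
      IsLocalization.subsingleton (M := .powers (0 : R)) (Submonoid.mem_powers 0)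
    exact hL.smod_mem_of_subsingleton
  | add f g _ _ hf hg => exact hL.smod_away_add_mem hf hg
  | smul r f _ hf =>
    rw [smul_eq_mul, mul_comm]
    exact hL.smod_away_mul_mem (Localization.Away f) _ f r hf

theorem smod_away_mem_of_pow {f : R} (n : ℕ)
    (hf : smod R (.of R (Localization.Away (f ^ n))) ∈ L) :
    smod R (.of R (Localization.Away f)) ∈ L :=
  have : IsLocalization.Away (f ^ n * f) (Localization.Away f) :=
    .mul_of_isUnit' _ _ (map_pow (algebraMap R (Localization.Away f)) f n ▸
      (IsLocalization.Away.algebraMap_isUnit f).pow n)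
  hL.smod_away_mul_mem (Localization.Away (f ^ n)) _ (f ^ n) f hf

theorem smod_away_mem_of_mem_radical {J : Set R}
    (hJ : ∀ f ∈ J, smod R (.of R (Localization.Away f)) ∈ L) {f : R}
    (hf : f ∈ (Ideal.span J).radical) : smod R (.of R (Localization.Away f)) ∈ L :=
  have ⟨n, hn⟩ := hf
  hL.smod_away_mem_of_pow n (hL.smod_away_mem_of_mem_span hJ hn)

end IsLocalizingSub

end Modules

/-- Theorem: for an arbitrary subset `J ⊆ R`, with `√J` the radical of the ideal
generated by `J`, one has `Loc({R_f : f ∈ J}) = Loc({R_f : f ∈ √J})` in `D(R)`. -/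
theorem loc_localizations_eq_loc_localizations_radical (R : Type u) [CommRing R]
    [HasDerivedCategory.{w'} (ModuleCat.{u} R)] (J : Set R) :
    Loc.{u} {x | ∃ f ∈ J, x = smod R (ModuleCat.of R (Localization.Away f))} =
      Loc.{u} {x | ∃ f ∈ (Ideal.span J).radical,
        x = smod R (ModuleCat.of R (Localization.Away f))} := by
  have hJ : ∀ f ∈ J, smod R (.of R (Localization.Away f)) ∈
      Loc.{u} {x | ∃ f ∈ J, x = smod R (ModuleCat.of R (Localization.Away f))} :=
    fun f hf ↦ subset_loc _ ⟨f, hf, rfl⟩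
  apply Set.Subset.antisymm
  · refine (isLocalizingSub_loc _).loc_subset ?_
    rintro _ ⟨f, hf, rfl⟩
    exact subset_loc _ ⟨f, Ideal.le_radical (Ideal.subset_span hf), rfl⟩
  · refine (isLocalizingSub_loc _).loc_subset ?_
    rintro _ ⟨f, hf, rfl⟩
    exact (isLocalizingSub_loc _).smod_away_mem_of_mem_radical hJ hf
end

section
/- Let R be a commutative ring and let I and J be finitely generated ideals of R. Then Loc({R_f : f ∈ √I}) ⊆ Loc({R_f : f ∈ √J}) if and only if √I ⊆ √J. -/
open CategoryTheory CategoryTheory.Limits CategoryTheory.Pretriangulated ZeroObject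

universe w w' v u

/-!
For a prime `p`, the objects of `D(R)` with no nonzero maps to any shift of the residue field `κ(p)`
form a localizing subcategory. It contains `R_g` for `g ∈ p`, because `g` acts invertibly on `R_g`
and as zero on `κ(p)`; it does not contain `R_f` for `f ∉ p`, because `R → κ(p)` factors through
`R_f`. So if `R_f` lies in the localizing subcategory generated by the `R_g` with `g ∈ S`, then `f`
lies in every prime containing `S`.
-/

section Localizing

variable {T : Type u} [Category.{v} T] [Preadditive T] [HasZeroObject T]
  [HasShift T ℤ] [∀ n : ℤ, (shiftFunctor T n).Additive] [Pretriangulated T]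

theorem loc_subset_of_isLocalizingSub {S L : Set T} (hL : IsLocalizingSub.{w} L) (hS : S ⊆ L) :
    Loc.{w} S ⊆ L :=
  Set.sInter_subset_of_mem ⟨hL, hS⟩

theorem loc_subset_loc_iff {S S' : Set T} : Loc.{w} S ⊆ Loc.{w} S' ↔ S ⊆ Loc.{w} S' :=
  ⟨(subset_loc S).trans, fun h => Set.subset_sInter fun _ hL =>
    loc_subset_of_isLocalizingSub hL.1 (h.trans (loc_subset_of_isLocalizingSub hL.1 hL.2))⟩

theorem isLocalizingSub_leftOrthogonal (P : ObjectProperty T) [P.IsStableUnderShift ℤ] :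
    IsLocalizingSub.{w} {x | P.leftOrthogonal x} where
  zero_mem := P.leftOrthogonal.prop_zero
  mem_of_iso e hx := P.leftOrthogonal.prop_of_iso e hx
  shift_mem n _ hx := P.leftOrthogonal.le_shift n _ hx
  cone_mem Tr hTr h₁ h₂ := P.leftOrthogonal.ext_of_isTriangulatedClosed₃ Tr hTr h₁ h₂
  coprod_mem _ c hc h _ φ hY := Cofan.IsColimit.hom_ext hc _ _ fun i => by
    rw [h i (c.inj i ≫ φ) hY, comp_zero]

end Localizing

theorem leftOrthogonal_shiftClosure_singleton_iff {C : Type u} [Category.{v} C]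
    [HasZeroMorphisms C] {A : Type w} [AddMonoid A] [HasShift C A] {X Y : C} :
    ((ObjectProperty.singleton Y).shiftClosure A).leftOrthogonal X ↔
      ∀ (a : A) (φ : X ⟶ Y⟦a⟧), φ = 0 := by
  constructor
  · exact fun h a φ => h φ ⟨Y, a, Iso.refl _, by simp⟩
  · rintro h Z φ ⟨Y', a, e, hY'⟩
    obtain rfl : Y = Y' := by simpa using hY'
    rw [← cancel_mono e.hom, h a (φ ≫ e.hom), zero_comp]

theorem eq_zero_of_epi_smul_id {k : Type w} [Semiring k] {C : Type u} [Category.{v} C]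
    [Preadditive C] [Linear k C] {r : k} {X Y : C} (hX : Epi (r • 𝟙 X)) (hY : r • 𝟙 Y = 0)
    (φ : X ⟶ Y) : φ = 0 := by
  rw [← cancel_epi (r • 𝟙 X)]
  calc (r • 𝟙 X) ≫ φ = φ ≫ (r • 𝟙 Y) := by simp
    _ = (r • 𝟙 X) ≫ 0 := by rw [hY, comp_zero, comp_zero]

section ModuleCat

variable {R : Type u} [CommRing R] {A : Type v} [Ring A] [Algebra R A] {r : R}

theorem isIso_smul_id_of_isUnit_algebraMap (hr : IsUnit (algebraMap R A r)) :
    IsIso (r • 𝟙 (ModuleCat.of R A)) := by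
  rw [ConcreteCategory.isIso_iff_bijective]
  convert IsUnit.isUnit_iff_mulLeft_bijective.mp hr using 1
  ext a
  simp [Algebra.smul_def]

theorem smul_id_eq_zero_of_algebraMap_eq_zero (hr : algebraMap R A r = 0) :
    r • 𝟙 (ModuleCat.of R A) = 0 := by
  ext a
  simp [Algebra.smul_def, hr]

end ModuleCat

section DerivedCategory

variable {R : Type u} [CommRing R] [HasDerivedCategory.{w'} (ModuleCat.{u} R)]

theorem smod_hom_shift_eq_zero {r : R} {M N : ModuleCat.{u} R} (hM : IsIso (r • 𝟙 M))
    (hN : r • 𝟙 N = 0) (n : ℤ) (φ : smod R M ⟶ (smod R N)⟦n⟧) : φ = 0 := by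
  let F := DerivedCategory.singleFunctor (ModuleCat.{u} R) 0
  have hFM : Epi (r • 𝟙 (F.obj M)) := by
    rw [← F.map_id, ← F.map_smul]
    infer_instance
  have hFN : r • 𝟙 ((F ⋙ shiftFunctor _ n).obj N) = 0 := by
    rw [← (F ⋙ shiftFunctor _ n).map_id, ← Functor.map_smul, hN, Functor.map_zero]
  exact eq_zero_of_epi_smul_id hFM hFN φ

theorem eq_zero_of_smod_hom_shift_zero_eq_zero {M N : ModuleCat.{u} R}
    (h : ∀ φ : smod R M ⟶ (smod R N)⟦(0 : ℤ)⟧, φ = 0) (f : M ⟶ N) : f = 0 := by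
  let F := DerivedCategory.singleFunctor (ModuleCat.{u} R) 0
  let e := (shiftFunctorZero (DerivedCategory (ModuleCat.{u} R)) ℤ).app (F.obj N)
  have hf : F.map f ≫ e.inv = 0 := h _
  exact F.zero_of_map_zero f (zero_of_comp_mono e.inv hf)

theorem smod_away_hom_shift_eq_zero_iff (f : R) (K : Type u) [Field K] [Algebra R K] :
    (∀ (n : ℤ) (φ : smod R (ModuleCat.of R (Localization.Away f)) ⟶
      (smod R (ModuleCat.of R K))⟦n⟧), φ = 0) ↔ algebraMap R K f = 0 := by
  constructor
  · intro h
    by_contra hf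
    let a : Localization.Away f →ₐ[R] K :=
      IsLocalization.Away.liftAlgHom f (f := Algebra.ofId R K) (.mk0 _ hf)
    have ha : ModuleCat.ofHom a.toLinearMap = 0 :=
      eq_zero_of_smod_hom_shift_zero_eq_zero (h 0) _
    have ha₁ : a 1 = 0 := congr($ha (1 : Localization.Away f))
    exact one_ne_zero ((map_one a).symm.trans ha₁)
  · exact fun hf => smod_hom_shift_eq_zero
      (isIso_smul_id_of_isUnit_algebraMap (IsLocalization.Away.algebraMap_isUnit f))
      (smul_id_eq_zero_of_algebraMap_eq_zero hf)

theorem mem_radical_span_of_smod_away_mem_loc {S : Set R} {f : R}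
    (hf : smod R (ModuleCat.of R (Localization.Away f)) ∈
      Loc.{w} {x | ∃ g ∈ S, x = smod R (ModuleCat.of R (Localization.Away g))}) :
    f ∈ (Ideal.span S).radical := by
  rw [Ideal.radical_eq_sInf, Submodule.mem_sInf]
  rintro (p : Ideal R) ⟨hSp, hp⟩
  rw [← p.algebraMap_residueField_eq_zero, ← smod_away_hom_shift_eq_zero_iff,
    ← leftOrthogonal_shiftClosure_singleton_iff]
  refine loc_subset_of_isLocalizingSub (isLocalizingSub_leftOrthogonal _) ?_ hf
  rintro _ ⟨g, hg, rfl⟩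
  exact leftOrthogonal_shiftClosure_singleton_iff.mpr <|
    (smod_away_hom_shift_eq_zero_iff g _).mpr <|
      p.algebraMap_residueField_eq_zero.mpr (hSp (Ideal.subset_span hg))

end DerivedCategory

theorem loc_localizations_subset_iff_radical_le_general (R : Type u) [CommRing R]
    [HasDerivedCategory.{w'} (ModuleCat.{u} R)] (I J : Ideal R) :
    Loc.{w} {x | ∃ f ∈ I.radical,
        x = smod R (ModuleCat.of R (Localization.Away f))} ⊆
      Loc.{w} {x | ∃ f ∈ J.radical,
        x = smod R (ModuleCat.of R (Localization.Away f))} ↔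
    I.radical ≤ J.radical := by
  rw [loc_subset_loc_iff]
  constructor
  · intro h f hf
    have hfJ := mem_radical_span_of_smod_away_mem_loc (h ⟨f, hf, rfl⟩)
    rwa [Ideal.span_eq, Ideal.radical_idem] at hfJ
  · rintro h _ ⟨f, hf, rfl⟩
    exact subset_loc _ ⟨f, h hf, rfl⟩

/-- Theorem: for finitely generated ideals `I`, `J` of `R`,
`Loc({R_f : f ∈ √I}) ⊆ Loc({R_f : f ∈ √J})` iff `√I ⊆ √J`. -/
theorem loc_localizations_subset_iff_radical_le (R : Type u) [CommRing R]
    [HasDerivedCategory.{w'} (ModuleCat.{u} R)]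
    (I J : Ideal R) (hI : I.FG) (hJ : J.FG) :
    Loc.{u} {x | ∃ f ∈ I.radical,
        x = smod R (ModuleCat.of R (Localization.Away f))} ⊆
      Loc.{u} {x | ∃ f ∈ J.radical,
        x = smod R (ModuleCat.of R (Localization.Away f))} ↔
    I.radical ≤ J.radical :=
  loc_localizations_subset_iff_radical_le_general R I J
end

section
/- Let (T, ⊗, 1) be a tensor triangulated category having only a set of radical thick tensor ideals. Then the radical thick tensor ideals of T, ordered by inclusion (with meet given by intersection and join of a family given by the radical of the thick tensor ideal generated by their union), form a coherent frame, and its finite elements are precisely the principal radical thick tensor ideals, i.e. those of the form √a for a single object a ∈ T. -/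
open CategoryTheory CategoryTheory.Limits CategoryTheory.Pretriangulated
open CategoryTheory.MonoidalCategory ZeroObject

universe w v u

section TT

variable {T : Type u} [Category.{v} T] [Preadditive T] [HasZeroObject T]
  [HasShift T ℤ] [∀ n : ℤ, (shiftFunctor T n).Additive] [Pretriangulated T]
  [MonoidalCategory T] [SymmetricCategory T]
  [∀ X : T, (tensorLeft X).CommShift ℤ]
  [∀ X : T, (tensorLeft X).IsTriangulated]

/-- `tpow a n` is the `n`-fold tensor power `a ⊗ ⋯ ⊗ a` (with `tpow a 0 = 𝟙_ T`). -/
def tpow (a : T) : ℕ → T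
  | 0 => 𝟙_ T
  | n + 1 => tpow a n ⊗ a

/-- A thick tensor ideal of a tensor triangulated category, encoded as a set of
objects: a full triangulated subcategory (closed under isomorphisms, zero,
shifts and cones of distinguished triangles), closed under finite sums and
direct summands (retracts), and absorbing for the tensor product. -/
structure IsThickTensorIdeal (S : Set T) : Prop where
  zero_mem : (0 : T) ∈ S
  mem_of_iso : ∀ {x y : T}, (x ≅ y) → x ∈ S → y ∈ S
  shift_mem : ∀ (n : ℤ) {x : T}, x ∈ S → x⟦n⟧ ∈ S
  cone_mem : ∀ (Tr : Triangle T), Tr ∈ distinguishedTriangles →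
    Tr.obj₁ ∈ S → Tr.obj₂ ∈ S → Tr.obj₃ ∈ S
  sum_mem : ∀ {x y : T} (c : BinaryCofan x y), IsColimit c → x ∈ S → y ∈ S → c.pt ∈ S
  summand_mem : ∀ {x y : T} (i : x ⟶ y) (r : y ⟶ x), i ≫ r = 𝟙 x → y ∈ S → x ∈ S
  tensor_mem : ∀ {a : T}, a ∈ S → ∀ b : T, a ⊗ b ∈ S

/-- The smallest thick tensor ideal containing a set `S` of objects. -/
def ttIdealGen (S : Set T) : Set T :=
  ⋂₀ {I : Set T | IsThickTensorIdeal I ∧ S ⊆ I}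

/-- The radical `√S` of the thick tensor ideal generated by `S`: the objects
some positive tensor power of which lies in the thick tensor ideal generated
by `S`. -/
def ttRad (S : Set T) : Set T :=
  {a : T | ∃ n : ℕ, 1 ≤ n ∧ tpow a n ∈ ttIdealGen S}

/-- A radical thick tensor ideal. -/
def IsRadicalTTIdeal (S : Set T) : Prop :=
  IsThickTensorIdeal S ∧ ∀ (a : T) (n : ℕ), 1 ≤ n → tpow a n ∈ S → a ∈ S

/-!
Tensor powers only depend on isomorphism classes, and the isomorphism classes of objects form a
commutative monoid `M` (the skeleton) in which a thick tensor ideal becomes a semigroup ideal `I`.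
If `z` lies in the thick ideal generated by `x` and `y`, then `w * x ∈ I` and `w * y ∈ I` force
`w * z ∈ I`, because `(I : w)` is again thick. In any commutative monoid this implies that `z` is
nilpotent modulo `I` as soon as `x` and `y` are; hence radicals are thick ideals. Applying colon
ideals twice gives `√A ∩ √B = √{a ⊗ b | a ∈ A, b ∈ B}`, which contains the distributivity law.
Compactness comes from the fact that a generated thick ideal is the directed union of those
generated by the finite subsets, and finitely many objects generate the same ideal as their sum.
-/

section Monoid

variable {M : Type*} [CommMonoid M]

theorem mul_pow_add_mem_of_forall_mul_mem (I : SemigroupIdeal M) {a b c : M}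
    (h : ∀ w, w * a ∈ I → w * b ∈ I → w * c ∈ I) :
    ∀ (m n : ℕ) (w : M), w * a ^ m ∈ I → w * b ^ n ∈ I → w * c ^ (m + n) ∈ I
  | 0, _, w, ha, _ => by
    rw [pow_zero, mul_one] at ha
    exact mul_comm w _ ▸ I.mul_mem _ ha
  | _ + 1, 0, w, _, hb => by
    rw [pow_zero, mul_one] at hb
    exact mul_comm w _ ▸ I.mul_mem _ hb
  | m + 1, n + 1, w, ha, hb => by
    have hca : w * c ^ (m + n + 1) * a ∈ I := by
      have := mul_pow_add_mem_of_forall_mul_mem I h m (n + 1) (w * a)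
        (by rwa [mul_assoc, ← pow_succ'])
        (by rw [mul_right_comm, mul_comm]; exact I.mul_mem a hb)
      rwa [mul_right_comm] at this
    have hcb : w * c ^ (m + n + 1) * b ∈ I := by
      have := mul_pow_add_mem_of_forall_mul_mem I h (m + 1) n (w * b)
        (by rw [mul_right_comm, mul_comm]; exact I.mul_mem b ha)
        (by rwa [mul_assoc, ← pow_succ'])
      rwa [mul_right_comm, Nat.add_right_comm] at this
    rw [← Nat.add_assoc, Nat.add_right_comm m 1 n, pow_succ, ← mul_assoc]
    exact h _ hca hcb

end Monoid

theorem toSkeleton_tpow {C : Type*} [Category* C] [MonoidalCategory C] (a : C) :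
    ∀ n : ℕ, toSkeleton (tpow a n) = toSkeleton a ^ n
  | 0 => (pow_zero _).symm
  | n + 1 => by rw [tpow, Skeleton.toSkeleton_tensorObj, toSkeleton_tpow a n, pow_succ]

section Pretriangulated

variable {C : Type u} [Category.{v} C] [Preadditive C] [HasZeroObject C]
  [HasShift C ℤ] [∀ n : ℤ, (shiftFunctor C n).Additive] [Pretriangulated C]
  [MonoidalCategory C]

theorem IsThickTensorIdeal.sInter {𝒮 : Set (Set C)} (h𝒮 : ∀ I ∈ 𝒮, IsThickTensorIdeal I) :
    IsThickTensorIdeal (⋂₀ 𝒮) where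
  zero_mem I hI := (h𝒮 I hI).zero_mem
  mem_of_iso e hx I hI := (h𝒮 I hI).mem_of_iso e (hx I hI)
  shift_mem n _ hx I hI := (h𝒮 I hI).shift_mem n (hx I hI)
  cone_mem Tr hTr hx hy I hI := (h𝒮 I hI).cone_mem Tr hTr (hx I hI) (hy I hI)
  sum_mem c hc hx hy I hI := (h𝒮 I hI).sum_mem c hc (hx I hI) (hy I hI)
  summand_mem i r hir hy I hI := (h𝒮 I hI).summand_mem i r hir (hy I hI)
  tensor_mem ha b I hI := (h𝒮 I hI).tensor_mem (ha I hI) b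

theorem isThickTensorIdeal_ttIdealGen (S : Set C) : IsThickTensorIdeal (ttIdealGen S) :=
  .sInter fun _ hI => hI.1

theorem subset_ttIdealGen (S : Set C) : S ⊆ ttIdealGen S :=
  Set.subset_sInter fun _ hI => hI.2

theorem ttIdealGen_subset {S I : Set C} (hI : IsThickTensorIdeal I) (h : S ⊆ I) :
    ttIdealGen S ⊆ I :=
  Set.sInter_subset_of_mem ⟨hI, h⟩

theorem ttIdealGen_mono : Monotone (ttIdealGen : Set C → Set C) := fun _ S h =>
  ttIdealGen_subset (isThickTensorIdeal_ttIdealGen S) (h.trans (subset_ttIdealGen S))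

theorem isThickTensorIdeal_of_ttIdealGen_pair_subset {S : Set C} (hS : S.Nonempty)
    (h : ∀ x ∈ S, ∀ y ∈ S, ttIdealGen {x, y} ⊆ S) : IsThickTensorIdeal S := by
  have thick (x y : C) := isThickTensorIdeal_ttIdealGen {x, y}
  have left (x y : C) : x ∈ ttIdealGen {x, y} := subset_ttIdealGen _ (.inl rfl)
  have right (x y : C) : y ∈ ttIdealGen {x, y} := subset_ttIdealGen _ (.inr rfl)
  obtain ⟨s, hs⟩ := hS
  exact
    { zero_mem := h s hs s hs (thick s s).zero_mem
      mem_of_iso := fun {x _} e hx => h x hx x hx ((thick x x).mem_of_iso e (left x x))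
      shift_mem := fun n x hx => h x hx x hx ((thick x x).shift_mem n (left x x))
      cone_mem := fun Tr hTr hx hy =>
        h _ hx _ hy ((thick _ _).cone_mem Tr hTr (left _ _) (right _ _))
      sum_mem := fun {x y} c hc hx hy =>
        h x hx y hy ((thick x y).sum_mem c hc (left x y) (right x y))
      summand_mem := fun {_ y} i r hir hy =>
        h y hy y hy ((thick y y).summand_mem i r hir (left y y))
      tensor_mem := fun {a} ha b => h a ha a ha ((thick a a).tensor_mem (left a a) b) }

theorem IsThickTensorIdeal.iUnion_of_directed {ι : Type*} [Nonempty ι] {I : ι → Set C}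
    (hI : ∀ i, IsThickTensorIdeal (I i)) (hd : Directed (· ⊆ ·) I) :
    IsThickTensorIdeal (⋃ i, I i) := by
  refine isThickTensorIdeal_of_ttIdealGen_pair_subset
    ⟨0, Set.mem_iUnion_of_mem (Classical.arbitrary ι) (hI _).zero_mem⟩ fun x hx y hy => ?_
  obtain ⟨i, hxi⟩ := Set.mem_iUnion.1 hx
  obtain ⟨j, hyj⟩ := Set.mem_iUnion.1 hy
  obtain ⟨k, hik, hjk⟩ := hd i j
  exact (ttIdealGen_subset (hI k) (Set.pair_subset (hik hxi) (hjk hyj))).trans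
    (Set.subset_iUnion I k)

theorem exists_finite_subset_mem_ttIdealGen {S : Set C} {x : C} (hx : x ∈ ttIdealGen S) :
    ∃ F ⊆ S, F.Finite ∧ x ∈ ttIdealGen F := by
  classical
  have hmono : Monotone fun F : Finset S => ttIdealGen (Subtype.val '' (F : Set S)) :=
    fun _ _ h => ttIdealGen_mono (Set.image_mono (Finset.coe_subset.2 h))
  have hS : S ⊆ ⋃ F : Finset S, ttIdealGen (Subtype.val '' (F : Set S)) := fun s hs =>
    Set.mem_iUnion_of_mem {⟨s, hs⟩} (subset_ttIdealGen _ (by simp))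
  obtain ⟨F, hF⟩ := Set.mem_iUnion.1 <| ttIdealGen_subset
    (.iUnion_of_directed (fun _ => isThickTensorIdeal_ttIdealGen _) hmono.directed_le) hS hx
  exact ⟨_, Subtype.coe_image_subset S F, F.finite_toSet.image _, hF⟩

theorem IsThickTensorIdeal.biprod_mem_iff {I : Set C} (hI : IsThickTensorIdeal I) {x y : C} :
    (x ⊞ y) ∈ I ↔ x ∈ I ∧ y ∈ I :=
  ⟨fun h => ⟨hI.summand_mem biprod.inl biprod.fst biprod.inl_fst h,
    hI.summand_mem biprod.inr biprod.snd biprod.inr_snd h⟩,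
    fun h => hI.sum_mem _ (BinaryBiproduct.isColimit x y) h.1 h.2⟩

theorem exists_mem_iff_subset_of_finite {F : Set C} (hF : F.Finite) :
    ∃ a : C, ∀ I, IsThickTensorIdeal I → (a ∈ I ↔ F ⊆ I) := by
  induction F, hF using Set.Finite.induction_on with
  | empty => exact ⟨0, fun I hI => iff_of_true hI.zero_mem (Set.empty_subset I)⟩
  | @insert b F _ _ ih =>
    obtain ⟨a, ha⟩ := ih
    exact ⟨b ⊞ a, fun I hI => by rw [hI.biprod_mem_iff, ha I hI, Set.insert_subset_iff]⟩

theorem exists_ttIdealGen_eq_singleton_of_finite {F : Set C} (hF : F.Finite) :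
    ∃ a : C, ttIdealGen F = ttIdealGen {a} := by
  obtain ⟨a, ha⟩ := exists_mem_iff_subset_of_finite hF
  refine ⟨a, congrArg Set.sInter (Set.ext fun I => and_congr_right fun hI => ?_)⟩
  rw [Set.singleton_subset_iff, ha I hI]

theorem exists_finite_subset_mem_ttRad {S : Set C} {x : C} (hx : x ∈ ttRad S) :
    ∃ F ⊆ S, F.Finite ∧ x ∈ ttRad F := by
  obtain ⟨n, hn, hxn⟩ := hx
  obtain ⟨F, hFS, hF, hxF⟩ := exists_finite_subset_mem_ttIdealGen hxn
  exact ⟨F, hFS, hF, n, hn, hxF⟩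

theorem exists_ttRad_eq_singleton_of_finite {F : Set C} (hF : F.Finite) :
    ∃ a : C, ttRad F = ttRad {a} :=
  (exists_ttIdealGen_eq_singleton_of_finite hF).imp fun a ha => by simp only [ttRad, ha]

theorem ttIdealGen_subset_ttRad (S : Set C) : ttIdealGen S ⊆ ttRad S := fun x hx =>
  ⟨1, le_rfl, (isThickTensorIdeal_ttIdealGen S).mem_of_iso (λ_ x).symm hx⟩

theorem subset_ttRad (S : Set C) : S ⊆ ttRad S :=
  (subset_ttIdealGen S).trans (ttIdealGen_subset_ttRad S)

theorem mem_ttRad_singleton (a : C) : a ∈ ttRad {a} :=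
  subset_ttRad {a} rfl

theorem ttRad_singleton_unit : ttRad {𝟙_ C} = Set.univ := by
  have hG := isThickTensorIdeal_ttIdealGen {𝟙_ C}
  exact Set.eq_univ_of_forall fun x => ttIdealGen_subset_ttRad _ <|
    hG.mem_of_iso (λ_ x) (hG.tensor_mem (subset_ttIdealGen _ rfl) x)

theorem ttRad_subset {S J : Set C} (hJ : IsRadicalTTIdeal J) (h : S ⊆ J) : ttRad S ⊆ J :=
  fun x ⟨n, hn, hx⟩ => hJ.2 x n hn (ttIdealGen_subset hJ.1 h hx)

theorem ttRad_mono : Monotone (ttRad : Set C → Set C) :=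
  fun _ _ h _ ⟨n, hn, hx⟩ => ⟨n, hn, ttIdealGen_mono h hx⟩

theorem IsRadicalTTIdeal.ttRad_eq {J : Set C} (hJ : IsRadicalTTIdeal J) : ttRad J = J :=
  (ttRad_subset hJ subset_rfl).antisymm (subset_ttRad J)

theorem IsRadicalTTIdeal.inter {I J : Set C} (hI : IsRadicalTTIdeal I)
    (hJ : IsRadicalTTIdeal J) : IsRadicalTTIdeal (I ∩ J) := by
  refine ⟨?_, fun a n hn h => ⟨hI.2 a n hn h.1, hJ.2 a n hn h.2⟩⟩
  rw [← Set.sInter_pair]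
  exact .sInter (by simp [hI.1, hJ.1])

theorem IsRadicalTTIdeal.mem_of_tensor_self_mem {I : Set C} (hI : IsRadicalTTIdeal I) {x : C}
    (hx : x ⊗ x ∈ I) : x ∈ I :=
  hI.2 x 2 one_le_two (hI.1.mem_of_iso (whiskerRightIso (λ_ x).symm x) hx)

section Braided

variable [BraidedCategory C]

namespace IsThickTensorIdeal

variable {I : Set C}

theorem tensor_mem_comm (hI : IsThickTensorIdeal I) {x y : C} : x ⊗ y ∈ I ↔ y ⊗ x ∈ I :=
  ⟨hI.mem_of_iso (β_ x y), hI.mem_of_iso (β_ y x)⟩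

theorem tensor_mem_left (hI : IsThickTensorIdeal I) {x : C} (hx : x ∈ I) (b : C) : b ⊗ x ∈ I :=
  hI.tensor_mem_comm.1 (hI.tensor_mem hx b)

/-- The isomorphism classes of the objects of a thick tensor ideal, as an ideal of the commutative
monoid of all isomorphism classes of objects under `⊗`. -/
def toSemigroupIdeal (hI : IsThickTensorIdeal I) : SemigroupIdeal (Skeleton C) where
  carrier := toSkeleton '' I
  smul_mem' := by
    rintro ⟨b⟩ _ ⟨x, hx, rfl⟩
    exact ⟨b ⊗ x, hI.tensor_mem_left hx b, Skeleton.toSkeleton_tensorObj b x⟩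

theorem toSkeleton_mem_toSemigroupIdeal (hI : IsThickTensorIdeal I) {x : C} :
    toSkeleton x ∈ hI.toSemigroupIdeal ↔ x ∈ I :=
  ⟨fun ⟨_, hy, h⟩ => hI.mem_of_iso (Skeleton.isoOfEq h) hy, fun hx => ⟨x, hx, rfl⟩⟩

theorem tpow_mem_iff (hI : IsThickTensorIdeal I) {a : C} {n : ℕ} :
    tpow a n ∈ I ↔ toSkeleton a ^ n ∈ hI.toSemigroupIdeal := by
  rw [← toSkeleton_tpow, hI.toSkeleton_mem_toSemigroupIdeal]

theorem tensor_mem_iff (hI : IsThickTensorIdeal I) {x y : C} :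
    x ⊗ y ∈ I ↔ toSkeleton x * toSkeleton y ∈ hI.toSemigroupIdeal := by
  rw [← Skeleton.toSkeleton_tensorObj, hI.toSkeleton_mem_toSemigroupIdeal]

end IsThickTensorIdeal

end Braided

section TensorExact

variable [∀ X : C, (tensorLeft X).CommShift ℤ] [∀ X : C, (tensorLeft X).IsTriangulated]

/-- The colon `(I : w)` of a set of objects `I`. When `I` is a thick tensor ideal so is `(I : w)`,
which lets a condition `w ⊗ y ∈ I` be checked on generators `y`. -/
def ttColon (I : Set C) (w : C) : Set C := {y | w ⊗ y ∈ I}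

theorem IsThickTensorIdeal.ttColon {I : Set C} (hI : IsThickTensorIdeal I) (w : C) :
    IsThickTensorIdeal (ttColon I w) where
  zero_mem := hI.mem_of_iso (tensorLeft w).mapZeroObject.symm hI.zero_mem
  mem_of_iso e := hI.mem_of_iso ((tensorLeft w).mapIso e)
  shift_mem n x hx :=
    hI.mem_of_iso (((tensorLeft w).commShiftIso n).app x).symm (hI.shift_mem n hx)
  cone_mem Tr hTr := hI.cone_mem _ ((tensorLeft w).map_distinguished Tr hTr)
  sum_mem {x y} c hc := hI.sum_mem (BinaryCofan.mk (w ◁ c.inl) (w ◁ c.inr)) <|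
    mapIsColimitOfPreservesOfIsColimit (tensorLeft w) c.inl c.inr
      (hc.ofIsoColimit (isoBinaryCofanMk c))
  summand_mem i r hir := hI.summand_mem (w ◁ i) (w ◁ r) <| by
    rw [← MonoidalCategory.whiskerLeft_comp, hir, MonoidalCategory.whiskerLeft_id]
  tensor_mem ha b := hI.mem_of_iso (α_ w _ b) (hI.tensor_mem ha b)

variable [BraidedCategory C]

theorem ttIdealGen_pair_subset_ttRad {S : Set C} {x y : C} (hx : x ∈ ttRad S)
    (hy : y ∈ ttRad S) : ttIdealGen {x, y} ⊆ ttRad S := by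
  intro z hz
  have hS := isThickTensorIdeal_ttIdealGen S
  obtain ⟨m, hm, hxm⟩ := hx
  obtain ⟨n, -, hyn⟩ := hy
  have hcolon (w : Skeleton C) (hwx : w * toSkeleton x ∈ hS.toSemigroupIdeal)
      (hwy : w * toSkeleton y ∈ hS.toSemigroupIdeal) :
      w * toSkeleton z ∈ hS.toSemigroupIdeal := by
    obtain ⟨w, rfl⟩ := Quotient.exists_rep w
    rw [← hS.tensor_mem_iff] at hwx hwy ⊢
    exact ttIdealGen_subset (hS.ttColon w) (Set.pair_subset hwx hwy) hz
  refine ⟨m + n, Nat.le_add_right_of_le hm, hS.tpow_mem_iff.2 ?_⟩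
  simpa using mul_pow_add_mem_of_forall_mul_mem hS.toSemigroupIdeal hcolon m n 1
    (by simpa using hS.tpow_mem_iff.1 hxm) (by simpa using hS.tpow_mem_iff.1 hyn)

theorem isRadicalTTIdeal_ttRad (S : Set C) : IsRadicalTTIdeal (ttRad S) := by
  have hS := isThickTensorIdeal_ttIdealGen S
  refine ⟨isThickTensorIdeal_of_ttIdealGen_pair_subset
    ⟨0, ttIdealGen_subset_ttRad S hS.zero_mem⟩
    fun _ hx _ hy => ttIdealGen_pair_subset_ttRad hx hy, ?_⟩
  rintro a n hn ⟨m, hm, ham⟩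
  refine ⟨n * m, Nat.mul_pos hn hm, ?_⟩
  rwa [hS.tpow_mem_iff, pow_mul, ← toSkeleton_tpow, ← hS.tpow_mem_iff]

theorem IsRadicalTTIdeal.ttColon {I : Set C} (hI : IsRadicalTTIdeal I) (w : C) :
    IsRadicalTTIdeal (ttColon I w) := by
  refine ⟨hI.1.ttColon w, fun a n hn ha => hI.2 (w ⊗ a) n hn ?_⟩
  obtain ⟨k, rfl⟩ := Nat.exists_eq_add_of_le' hn
  have hwa : toSkeleton w * toSkeleton a ^ (k + 1) ∈ hI.1.toSemigroupIdeal := by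
    rw [← toSkeleton_tpow, ← hI.1.tensor_mem_iff]
    exact ha
  rw [hI.1.tpow_mem_iff, Skeleton.toSkeleton_tensorObj, mul_pow, pow_succ, mul_assoc]
  exact hI.1.toSemigroupIdeal.mul_mem _ hwa

theorem ttRad_inter_ttRad_subset {A B R : Set C} (hR : IsRadicalTTIdeal R)
    (h : ∀ a ∈ A, ∀ b ∈ B, a ⊗ b ∈ R) : ttRad A ∩ ttRad B ⊆ R := by
  rintro x ⟨hxA, hxB⟩
  have hax (a : C) (ha : a ∈ A) : a ⊗ x ∈ R := ttRad_subset (hR.ttColon a) (h a ha) hxB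
  have hxx : x ⊗ x ∈ R :=
    ttRad_subset (hR.ttColon x) (fun a ha => hR.1.tensor_mem_comm.1 (hax a ha)) hxA
  exact hR.mem_of_tensor_self_mem hxx

theorem ttRad_inter_ttRad (A B : Set C) :
    ttRad A ∩ ttRad B = ttRad (Set.image2 (· ⊗ ·) A B) := by
  have hA := isRadicalTTIdeal_ttRad A
  have hB := isRadicalTTIdeal_ttRad B
  refine (ttRad_inter_ttRad_subset (isRadicalTTIdeal_ttRad _) fun a ha b hb =>
    subset_ttRad _ (Set.mem_image2_of_mem ha hb)).antisymm (ttRad_subset (hA.inter hB) ?_)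
  rintro _ ⟨a, ha, b, hb, rfl⟩
  exact ⟨hA.1.tensor_mem (subset_ttRad A ha) b, hB.1.tensor_mem_left (subset_ttRad B hb) a⟩

theorem ttRad_singleton_inter_ttRad_singleton (a b : C) :
    ttRad {a} ∩ ttRad {b} = ttRad {a ⊗ b} := by
  rw [ttRad_inter_ttRad, Set.image2_singleton]

theorem IsRadicalTTIdeal.inter_ttRad_sUnion {J : Set C} (hJ : IsRadicalTTIdeal J)
    {𝒮 : Set (Set C)} (h𝒮 : ∀ I ∈ 𝒮, IsThickTensorIdeal I) :
    J ∩ ttRad (⋃₀ 𝒮) = ttRad (⋃₀ {K : Set C | ∃ I ∈ 𝒮, K = J ∩ I}) := by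
  apply Set.Subset.antisymm
  · nth_rw 1 [← hJ.ttRad_eq]
    refine ttRad_inter_ttRad_subset (isRadicalTTIdeal_ttRad _) ?_
    rintro a ha b ⟨I, hI, hb⟩
    exact subset_ttRad _
      ⟨J ∩ I, ⟨I, hI, rfl⟩, hJ.1.tensor_mem ha b, (h𝒮 I hI).tensor_mem_left hb a⟩
  · refine ttRad_subset (hJ.inter (isRadicalTTIdeal_ttRad _)) (Set.sUnion_subset ?_)
    rintro _ ⟨I, hI, rfl⟩
    exact Set.inter_subset_inter_right J ((Set.subset_sUnion_of_mem hI).trans (subset_ttRad _))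

theorem ttRad_sUnion_image_ttRad_singleton (A : Set C) :
    ttRad (⋃₀ ((fun a => ttRad {a}) '' A)) = ttRad A := by
  apply Set.Subset.antisymm
  · refine ttRad_subset (isRadicalTTIdeal_ttRad A) (Set.sUnion_subset ?_)
    rintro _ ⟨a, ha, rfl⟩
    exact ttRad_mono (Set.singleton_subset_iff.2 ha)
  · exact ttRad_mono fun a ha => ⟨_, ⟨a, ha, rfl⟩, mem_ttRad_singleton a⟩

theorem exists_finite_ttRad_singleton_subset_ttRad_sUnion {a : C} {𝒮 : Set (Set C)}
    (ha : ttRad {a} ⊆ ttRad (⋃₀ 𝒮)) : ∃ K ⊆ 𝒮, K.Finite ∧ ttRad {a} ⊆ ttRad (⋃₀ K) := by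
  obtain ⟨F, hF𝒮, hF, haF⟩ := exists_finite_subset_mem_ttRad (ha (mem_ttRad_singleton a))
  rw [Set.sUnion_eq_iUnion] at hF𝒮
  obtain ⟨K, hK, hFK⟩ := Set.finite_subset_iUnion hF hF𝒮
  refine ⟨Subtype.val '' K, Subtype.coe_image_subset 𝒮 K, hK.image _,
    ttRad_subset (isRadicalTTIdeal_ttRad _) (Set.singleton_subset_iff.2 (ttRad_mono ?_ haF))⟩
  rwa [Set.sUnion_image]

theorem IsRadicalTTIdeal.finite_iff_principal {I : Set C} (hI : IsRadicalTTIdeal I) :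
    (∀ 𝒮 : Set (Set C), (∀ J ∈ 𝒮, IsRadicalTTIdeal J) → I ⊆ ttRad (⋃₀ 𝒮) →
      ∃ K ⊆ 𝒮, K.Finite ∧ I ⊆ ttRad (⋃₀ K)) ↔ ∃ a : C, I = ttRad {a} := by
  constructor
  · intro h
    obtain ⟨F, hFI, hF, hIF⟩ := Set.exists_subset_image_finite_and.1 <|
      h ((fun a => ttRad {a}) '' I) (Set.forall_mem_image.2 fun a _ => isRadicalTTIdeal_ttRad {a})
        (by rw [ttRad_sUnion_image_ttRad_singleton, hI.ttRad_eq])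
    rw [ttRad_sUnion_image_ttRad_singleton] at hIF
    obtain ⟨a, ha⟩ := exists_ttRad_eq_singleton_of_finite hF
    exact ⟨a, ha ▸ hIF.antisymm (ttRad_subset hI hFI)⟩
  · rintro ⟨a, rfl⟩ 𝒮 -
    exact exists_finite_ttRad_singleton_subset_ttRad_sUnion

theorem radicalTTIdeals_coherent_frame_general :
    (∀ I J : Set C, IsRadicalTTIdeal I → IsRadicalTTIdeal J → IsRadicalTTIdeal (I ∩ J)) ∧
    (∀ 𝒮 : Set (Set C), IsRadicalTTIdeal (ttRad (⋃₀ 𝒮)) ∧ (∀ I ∈ 𝒮, I ⊆ ttRad (⋃₀ 𝒮)) ∧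
      (∀ J : Set C, IsRadicalTTIdeal J → (∀ I ∈ 𝒮, I ⊆ J) → ttRad (⋃₀ 𝒮) ⊆ J)) ∧
    (∀ J : Set C, IsRadicalTTIdeal J → ∀ 𝒮 : Set (Set C), (∀ I ∈ 𝒮, IsThickTensorIdeal I) →
      J ∩ ttRad (⋃₀ 𝒮) = ttRad (⋃₀ {K : Set C | ∃ I ∈ 𝒮, K = J ∩ I})) ∧
    (∀ I : Set C, IsRadicalTTIdeal I →
      I = ttRad (⋃₀ {K : Set C | ∃ a ∈ I, K = ttRad {a}})) ∧
    ttRad {(𝟙_ C)} = Set.univ ∧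
    (∀ a b : C, ttRad {a} ∩ ttRad {b} = ttRad {a ⊗ b}) ∧
    (∀ I : Set C, IsRadicalTTIdeal I →
      ((∀ 𝒮 : Set (Set C), (∀ J ∈ 𝒮, IsRadicalTTIdeal J) → I ⊆ ttRad (⋃₀ 𝒮) →
          ∃ K ⊆ 𝒮, K.Finite ∧ I ⊆ ttRad (⋃₀ K)) ↔
        ∃ a : C, I = ttRad {a})) := by
  refine ⟨fun I J => .inter, fun 𝒮 => ⟨isRadicalTTIdeal_ttRad _, ?_, ?_⟩,
    fun J hJ 𝒮 => hJ.inter_ttRad_sUnion, ?_, ttRad_singleton_unit,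
    ttRad_singleton_inter_ttRad_singleton, fun I hI => hI.finite_iff_principal⟩
  · exact fun I hI => (Set.subset_sUnion_of_mem hI).trans (subset_ttRad _)
  · exact fun J hJ h => ttRad_subset hJ (Set.sUnion_subset h)
  · intro I hI
    simpa only [hI.ttRad_eq, Set.image, eq_comm] using
      (ttRad_sUnion_image_ttRad_singleton I).symm

end TensorExact

end Pretriangulated

/-- Theorem: the radical thick tensor ideals of a tensor triangulated category
`T`, ordered by inclusion, form a coherent frame (in this object-set encoding
they automatically form a set): binary meets are intersections, the join of a
family is the radical of the thick tensor ideal generated by the union, finite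
meets distribute over arbitrary joins, every element is a join of principal
radical thick tensor ideals `√a`, the top element is principal and principal
elements are closed under meets, and the finite (compact) elements are
precisely the principal radical thick tensor ideals `√a` for single objects
`a ∈ T`. -/
theorem radicalTTIdeals_coherent_frame :
    -- binary meets are intersections:
    (∀ I J : Set T, IsRadicalTTIdeal I → IsRadicalTTIdeal J →
      IsRadicalTTIdeal (I ∩ J)) ∧
    -- arbitrary joins: ttRad(⋃₀ 𝒮) is the least radical thick tensor ideal
    -- containing every member of 𝒮:
    (∀ 𝒮 : Set (Set T), (∀ I ∈ 𝒮, IsRadicalTTIdeal I) →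
      IsRadicalTTIdeal (ttRad (⋃₀ 𝒮)) ∧ (∀ I ∈ 𝒮, I ⊆ ttRad (⋃₀ 𝒮)) ∧
      (∀ J : Set T, IsRadicalTTIdeal J → (∀ I ∈ 𝒮, I ⊆ J) →
        ttRad (⋃₀ 𝒮) ⊆ J)) ∧
    -- the frame distributivity law:
    (∀ J : Set T, IsRadicalTTIdeal J → ∀ 𝒮 : Set (Set T),
      (∀ I ∈ 𝒮, IsRadicalTTIdeal I) →
      J ∩ ttRad (⋃₀ 𝒮) = ttRad (⋃₀ {K : Set T | ∃ I ∈ 𝒮, K = J ∩ I})) ∧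
    -- coherence: every element is the join of the principal (finite) elements
    -- below it:
    (∀ I : Set T, IsRadicalTTIdeal I →
      I = ttRad (⋃₀ {K : Set T | ∃ a ∈ I, K = ttRad {a}})) ∧
    -- the top element is principal, and principal elements are closed under
    -- binary meets:
    ttRad {(𝟙_ T)} = Set.univ ∧
    (∀ a b : T, ttRad {a} ∩ ttRad {b} = ttRad {a ⊗ b}) ∧
    -- the finite elements are exactly the principal ones:
    (∀ I : Set T, IsRadicalTTIdeal I →
      ((∀ 𝒮 : Set (Set T), (∀ J ∈ 𝒮, IsRadicalTTIdeal J) →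
          I ⊆ ttRad (⋃₀ 𝒮) →
            ∃ K ⊆ 𝒮, K.Finite ∧ I ⊆ ttRad (⋃₀ K)) ↔
        ∃ a : T, I = ttRad {a})) := by
  obtain ⟨hinter, hjoin, hdistrib, hrest⟩ := radicalTTIdeals_coherent_frame_general (C := T)
  exact ⟨hinter, fun 𝒮 _ => hjoin 𝒮,
    fun J hJ 𝒮 h𝒮 => hdistrib J hJ 𝒮 fun I hI => (h𝒮 I hI).1, hrest⟩

end TT
end

section
/- Let I be a tensor ideal in a tensor triangulated category (T, ⊗, 1), and let x → y → z → Σx be a distinguished triangle in T. If x^⊗p ∈ I and y^⊗q ∈ I for some p, q ≥ 1, then z^⊗(p+q−1) ∈ I. -/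
/-!
Tensoring `x → y → z → Σx` with `w` shows that `w ⊗ z` is a cone of a map `w ⊗ x ⟶ w ⊗ y`.
Replacing the factors `z` of `z^⊗n` one at a time by `x` or `y` therefore builds `z^⊗n` by
iterated cones from the objects `x^⊗i ⊗ y^⊗j` with `i + j = n`. If `n = p + q - 1`, then
`p ≤ i` or `q ≤ j`, so each of these objects lies in the ideal.
-/

open CategoryTheory CategoryTheory.Limits CategoryTheory.Pretriangulated
open CategoryTheory.MonoidalCategory ZeroObject

universe w v u

section TT

variable {T : Type u} [Category.{v} T] [Preadditive T] [HasZeroObject T]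
  [HasShift T ℤ] [∀ n : ℤ, (shiftFunctor T n).Additive] [Pretriangulated T]
  [MonoidalCategory T] [SymmetricCategory T]
  [∀ X : T, (tensorLeft X).CommShift ℤ]
  [∀ X : T, (tensorLeft X).IsTriangulated]

/-- A tensor ideal of a tensor triangulated category: a full triangulated
subcategory (closed under isomorphisms, zero, shifts and cones of distinguished
triangles) absorbing for the tensor product. -/
structure IsTensorIdeal (S : Set T) : Prop where
  zero_mem : (0 : T) ∈ S
  mem_of_iso : ∀ {x y : T}, (x ≅ y) → x ∈ S → y ∈ S
  shift_mem : ∀ (n : ℤ) {x : T}, x ∈ S → x⟦n⟧ ∈ S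
  cone_mem : ∀ (Tr : Triangle T), Tr ∈ distinguishedTriangles →
    Tr.obj₁ ∈ S → Tr.obj₂ ∈ S → Tr.obj₃ ∈ S
  tensor_mem : ∀ {a : T}, a ∈ S → ∀ b : T, a ⊗ b ∈ S

section

variable {C : Type u} [Category.{v} C] [MonoidalCategory C]

/-- The exchange of the last two factors of a threefold tensor product in a braided monoidal
category, by which a new factor is moved past a tensor power. -/
def tensorRightComm [BraidedCategory C] (a b c : C) : (a ⊗ b) ⊗ c ≅ (a ⊗ c) ⊗ b :=
  α_ a b c ≪≫ whiskerLeftIso a (β_ b c) ≪≫ (α_ a c b).symm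

variable [Preadditive C] [HasZeroObject C] [HasShift C ℤ]
  [∀ n : ℤ, (shiftFunctor C n).Additive] [Pretriangulated C]

section Cone

variable [∀ X : C, (tensorLeft X).CommShift ℤ] [∀ X : C, (tensorLeft X).IsTriangulated]
  (P : ObjectProperty C) [P.IsClosedUnderIsomorphisms] [P.IsTriangulatedClosed₃]
  {Tr : Triangle C}

theorem prop_tensor_obj₃ (hTr : Tr ∈ distTriang C) {w : C}
    (h₁ : P (w ⊗ Tr.obj₁)) (h₂ : P (w ⊗ Tr.obj₂)) : P (w ⊗ Tr.obj₃) :=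
  P.ext_of_isTriangulatedClosed₃ _ ((tensorLeft w).map_distinguished Tr hTr) h₁ h₂

variable [BraidedCategory C] {n : ℕ}

theorem prop_tpow_tensor_tpow_tensor_tpow_obj₃ (hTr : Tr ∈ distTriang C)
    (h : ∀ i j, i + j = n → P (tpow Tr.obj₁ i ⊗ tpow Tr.obj₂ j)) {i j k : ℕ}
    (hijk : i + j + k = n) : P ((tpow Tr.obj₁ i ⊗ tpow Tr.obj₂ j) ⊗ tpow Tr.obj₃ k) := by
  induction k generalizing i j with
  | zero => exact P.prop_of_iso (ρ_ _).symm (h i j hijk)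
  | succ k ih =>
    have h₁ : P (((tpow Tr.obj₁ i ⊗ tpow Tr.obj₂ j) ⊗ tpow Tr.obj₃ k) ⊗ Tr.obj₁) :=
      P.prop_of_iso
        (whiskerRightIso (tensorRightComm _ _ _) _ ≪≫ tensorRightComm _ _ _)
        (ih (i := i + 1) (j := j) (by omega))
    have h₂ : P (((tpow Tr.obj₁ i ⊗ tpow Tr.obj₂ j) ⊗ tpow Tr.obj₃ k) ⊗ Tr.obj₂) :=
      P.prop_of_iso
        (whiskerRightIso (α_ _ _ _).symm _ ≪≫ tensorRightComm _ _ _)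
        (ih (i := i) (j := j + 1) (by omega))
    exact P.prop_of_iso (α_ _ _ _) (prop_tensor_obj₃ P hTr h₁ h₂)

theorem prop_tpow_obj₃ (hTr : Tr ∈ distTriang C)
    (h : ∀ i j, i + j = n → P (tpow Tr.obj₁ i ⊗ tpow Tr.obj₂ j)) : P (tpow Tr.obj₃ n) :=
  P.prop_of_iso (whiskerRightIso (λ_ (𝟙_ C)) _ ≪≫ λ_ _)
    (prop_tpow_tensor_tpow_tensor_tpow_obj₃ P hTr h (i := 0) (j := 0) (by omega))

end Cone

namespace IsTensorIdeal

variable {I : Set C}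

theorem isClosedUnderIsomorphisms (hI : IsTensorIdeal I) :
    ObjectProperty.IsClosedUnderIsomorphisms (· ∈ I) :=
  ⟨hI.mem_of_iso⟩

theorem isTriangulatedClosed₃ (hI : IsTensorIdeal I) :
    ObjectProperty.IsTriangulatedClosed₃ (· ∈ I) :=
  have := hI.isClosedUnderIsomorphisms
  .mk' hI.cone_mem

theorem tpow_mem_of_le (hI : IsTensorIdeal I) {a : C} {m n : ℕ} (hmn : m ≤ n)
    (ha : tpow a m ∈ I) : tpow a n ∈ I := by
  induction n, hmn using Nat.le_induction with
  | base => exact ha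
  | succ n _ ih => exact hI.tensor_mem ih a

variable [BraidedCategory C]

theorem tensor_mem_right (hI : IsTensorIdeal I) (a : C) {b : C} (hb : b ∈ I) : a ⊗ b ∈ I :=
  hI.mem_of_iso (β_ b a) (hI.tensor_mem hb a)

theorem tpow_tensor_tpow_mem (hI : IsTensorIdeal I) {a b : C} {p q i j : ℕ}
    (hij : p + q ≤ i + j + 1) (ha : tpow a p ∈ I) (hb : tpow b q ∈ I) :
    tpow a i ⊗ tpow b j ∈ I := by
  obtain hi | hj : p ≤ i ∨ q ≤ j := by omega
  · exact hI.tensor_mem (hI.tpow_mem_of_le hi ha) _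
  · exact hI.tensor_mem_right _ (hI.tpow_mem_of_le hj hb)

end IsTensorIdeal

theorem tpow_cone_mem_tensorIdeal_general [BraidedCategory C]
    [∀ X : C, (tensorLeft X).CommShift ℤ] [∀ X : C, (tensorLeft X).IsTriangulated]
    {I : Set C} (hI : IsTensorIdeal I) {Tr : Triangle C} (hTr : Tr ∈ distTriang C)
    {p q n : ℕ} (hn : p + q ≤ n + 1) (hx : tpow Tr.obj₁ p ∈ I) (hy : tpow Tr.obj₂ q ∈ I) :
    tpow Tr.obj₃ n ∈ I := by
  have := hI.isClosedUnderIsomorphisms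
  have := hI.isTriangulatedClosed₃
  refine prop_tpow_obj₃ (· ∈ I) hTr fun i j hij => ?_
  exact hI.tpow_tensor_tpow_mem (by omega) hx hy

end

/-- Theorem: if `I` is a tensor ideal and `x → y → z → Σx` is a distinguished
triangle with `x^⊗p ∈ I` and `y^⊗q ∈ I` (`p, q ≥ 1`), then `z^⊗(p+q−1) ∈ I`. -/
theorem tpow_cone_mem_tensorIdeal (I : Set T) (hI : IsTensorIdeal I)
    (Tr : Triangle T) (hTr : Tr ∈ distinguishedTriangles)
    (p q : ℕ) (hp : 1 ≤ p) (hq : 1 ≤ q)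
    (hx : tpow Tr.obj₁ p ∈ I) (hy : tpow Tr.obj₂ q ∈ I) :
    tpow Tr.obj₃ (p + q - 1) ∈ I :=
  tpow_cone_mem_tensorIdeal_general hI hTr (by omega) hx hy

end TT
end
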